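/- Let ψ be entire, φ(z) = az + b with 0 < |a| < 1, p = b/(1-a), ψ(p) = 0, and C_{ψ,φ} bounded on F². Write q(z) = e^{conj(p)(a-1)z} ψ(z+p) = Σ_j q̂_j z^j/√(j!). Then for every nonnegative integer n and positive integer m, W(C_{ψ,φ}) contains the closed disk centered at 0 with radius |q̂_m a^n| √((n+m)!)/(2√(n! m!)). -/

import Mathlib

open MeasureTheory Complex

/-- The Gaussian measure `π⁻¹ e^{-|z|²} dA(z)` on `ℂ`. -/
noncomputable def gaussMeasure : Measure ℂ :=
  (volume : Measure ℂ).withDensity fun z => ENNReal.ofReal (Real.exp (-(‖z‖ ^ 2)) / Real.pi)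

/-- A function is entire if it is differentiable on all of `ℂ`. -/
def Entire (f : ℂ → ℂ) : Prop := Differentiable ℂ f

/-- The squared Fock-space norm `∫ |f|² dμ`. -/
noncomputable def fockNormSq (f : ℂ → ℂ) : ℝ := ∫ z, ‖f z‖ ^ 2 ∂gaussMeasure

/-- Membership in the Fock space `F²`: entire and square integrable w.r.t. the Gaussian. -/
def MemFock (f : ℂ → ℂ) : Prop :=
  Entire f ∧ Integrable (fun z => ‖f z‖ ^ 2) gaussMeasure

/-- The Fock-space inner product `⟨f, g⟩ = ∫ f ḡ dμ`. -/
noncomputable def fockInner (f g : ℂ → ℂ) : ℂ :=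
  ∫ z, f z * (starRingEnd ℂ) (g z) ∂gaussMeasure

/-- The weighted composition operator `C_{ψ,φ} f = ψ · (f ∘ φ)`. -/
def wcomp (ψ φ f : ℂ → ℂ) : ℂ → ℂ := fun z => ψ z * f (φ z)

/-- Boundedness of `C_{ψ,φ}` on `F²`. -/
def BoundedWCO (ψ φ : ℂ → ℂ) : Prop :=
  ∃ C : ℝ, ∀ f, MemFock f →
    MemFock (wcomp ψ φ f) ∧ fockNormSq (wcomp ψ φ f) ≤ C * fockNormSq f

/-- The numerical range `W(C_{ψ,φ}) = {⟨C_{ψ,φ} f, f⟩ : ‖f‖ = 1}` on `F²`. -/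
noncomputable def numRange (ψ φ : ℂ → ℂ) : Set ℂ :=
  {w | ∃ f, MemFock f ∧ fockNormSq f = 1 ∧ w = fockInner (wcomp ψ φ f) f}

/-- The point spectrum of `C_{ψ,φ}` on `F²`. -/
def pointSpectrum (ψ φ : ℂ → ℂ) : Set ℂ :=
  {lam | ∃ f, MemFock f ∧ f ≠ 0 ∧ wcomp ψ φ f = fun z => lam * f z}

/-- Compactness of `C_{ψ,φ}` on `F²`: it is bounded and the image of every sequence in the
unit ball of `F²` has a subsequence which is Cauchy in the `F²` norm. -/
def CompactWCO (ψ φ : ℂ → ℂ) : Prop :=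
  BoundedWCO ψ φ ∧ ∀ f : ℕ → ℂ → ℂ, (∀ k, MemFock (f k) ∧ fockNormSq (f k) ≤ 1) →
    ∃ g : ℕ → ℕ, StrictMono g ∧ ∀ ε : ℝ, 0 < ε → ∃ N : ℕ, ∀ i, N ≤ i → ∀ j, N ≤ j →
      fockNormSq (fun z => wcomp ψ φ (f (g i)) z - wcomp ψ φ (f (g j)) z) < ε

/-!
Conjugation with the Weyl translation that moves the origin to the fixed point `p` turns `C_{ψ,φ}`
into `C_{q,az}`. In the basis `e_k = z ^ k / √(k!)` the matrix of `C_{q,az}` is lower triangular,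
and its diagonal `q(0) a ^ k` vanishes because `q(0) = ψ(p) = 0`. Its compression to the span of
`e_n` and `e_{n+m}` is therefore a nilpotent `2 × 2` matrix with the single entry
`c = q̂_m a ^ n √((n+m)!) / √(n! m!)`, and the numerical range of such a matrix is the closed disk
of radius `|c| / 2`. The entries come from `⟨f, z ^ k⟩ = f⁽ᵏ⁾(0)`, which is Cauchy's formula on
each circle `|z| = r`, integrated over `r`.
-/

open Real (circleAverage)
open scoped ComplexConjugate Real

section Polar

variable {E : Type*} [NormedAddCommGroup E] [NormedSpace ℝ E]

theorem integrableOn_polarCoord_target_smul {f : ℂ → E} (hf : Integrable f) :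
    IntegrableOn (fun p : ℝ × ℝ => p.1 • f (Complex.polarCoord.symm p)) polarCoord.target := by
  have hf' : IntegrableOn (f ∘ measurableEquivRealProd.symm) polarCoord.source :=
    ((volume_preserving_equiv_real_prod.symm).integrable_comp_of_integrable hf).integrableOn
  rw [← polarCoord.symm_image_target_eq_source,
    integrableOn_image_iff_integrableOn_abs_det_fderiv_smul volume
      polarCoord.open_target.measurableSet
      (fun p _ => (hasFDerivAt_polarCoord_symm p).hasFDerivWithinAt)
      polarCoord.symm.injOn] at hf'
  refine hf'.congr_fun (fun p hp => ?_) polarCoord.open_target.measurableSet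
  simp only [det_fderivPolarCoordSymm, abs_of_pos (show 0 < p.1 from hp.1)]
  rfl

theorem setIntegral_polarCoord_symm_eq_circleAverage (f : ℂ → E) (r : ℝ) :
    ∫ θ in Set.Ioo (-π) π, f (Complex.polarCoord.symm (r, θ)) =
      (2 * π) • circleAverage f 0 r := by
  have hpolar (θ : ℝ) : Complex.polarCoord.symm (r, θ) = circleMap 0 r θ := by
    simp [circleMap, Complex.exp_mul_I]
  have hshift : ∫ θ in -π..π, f (circleMap 0 r θ) =
      ∫ θ in 0..2 * π, f (circleMap 0 r (θ + -π)) := by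
    rw [intervalIntegral.integral_comp_add_right fun θ => f (circleMap 0 r θ)]
    ring_nf
  simp only [hpolar]
  rw [Real.circleAverage_eq_integral_add (-π), smul_inv_smul₀ Real.two_pi_pos.ne',
    ← hshift, intervalIntegral.integral_of_le (by linarith [Real.pi_pos]),
    integral_Ioc_eq_integral_Ioo]

theorem integral_eq_integral_smul_circleAverage {f : ℂ → E} (hf : Integrable f) :
    ∫ z, f z = (2 * π) • ∫ r in Set.Ioi (0 : ℝ), r • circleAverage f 0 r := by
  have hint := integrableOn_polarCoord_target_smul hf
  rw [polarCoord_target, Measure.volume_eq_prod] at hint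
  rw [← Complex.integral_comp_polarCoord_symm, polarCoord_target, Measure.volume_eq_prod,
    setIntegral_prod _ hint, ← integral_smul]
  refine setIntegral_congr_fun measurableSet_Ioi fun r _ => ?_
  simp only
  rw [integral_smul, setIntegral_polarCoord_symm_eq_circleAverage, smul_comm]

end Polar

theorem circleAverage_conj_pow_smul {E : Type*} [NormedAddCommGroup E] [NormedSpace ℂ E]
    [CompleteSpace E] {f : ℂ → E} {c : ℂ} {r : ℝ} (hr : 0 < r)
    (hf : DiffContOnCl ℂ f (Metric.ball c r)) (k : ℕ) :
    circleAverage (fun z => conj (z - c) ^ k • f z) c r =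
      (r ^ (2 * k) / k.factorial : ℂ) • iteratedDeriv k f c := by
  have hsphere : Set.EqOn (fun z => conj (z - c) ^ k • f z)
      (fun z => (r ^ (2 * k) : ℂ) • ((1 / (z - c) ^ k) • f z)) (Metric.sphere c |r|) := by
    intro z hz
    rw [abs_of_pos hr, mem_sphere_iff_norm] at hz
    have hzc : z - c ≠ 0 := norm_pos_iff.1 (hz ▸ hr)
    have hconj : conj (z - c) = (r : ℂ) ^ 2 / (z - c) := by
      rw [eq_div_iff hzc, Complex.conj_mul', hz]
    simp only [hconj, smul_smul, pow_mul, div_pow, mul_one_div]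
  calc circleAverage (fun z => conj (z - c) ^ k • f z) c r
      = (r ^ (2 * k) : ℂ) • (2 * π * I)⁻¹ •
          ∮ z in C(c, r), (1 / (z - c) ^ (k + 1)) • f z := by
        rw [Real.circleAverage_congr_sphere hsphere, Real.circleAverage_fun_smul,
          Real.circleAverage_eq_circleIntegral hr.ne']
        simp only [smul_smul, one_div, pow_succ', mul_inv]
    _ = (r ^ (2 * k) / k.factorial : ℂ) • iteratedDeriv k f c := by
        rw [hf.circleIntegral_one_div_sub_center_pow_smul hr, smul_smul, smul_smul]
        congr 1
        field_simp [Complex.two_pi_I_ne_zero]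

theorem iteratedDeriv_pow_mul_zero {𝕜 : Type*} [NontriviallyNormedField 𝕜] {f : 𝕜 → 𝕜} {k : ℕ}
    (hf : ContDiffAt 𝕜 k f 0) (j : ℕ) :
    iteratedDeriv k (fun z => z ^ j * f z) 0 =
      k.descFactorial j * iteratedDeriv (k - j) f 0 := by
  rw [iteratedDeriv_fun_mul (by fun_prop) hf, Finset.sum_eq_single j]
  · rw [iteratedDeriv_fun_pow_zero, if_pos rfl, Nat.descFactorial_eq_factorial_mul_choose]
    push_cast
    ring
  · intro i _ hij
    rw [iteratedDeriv_fun_pow_zero, if_neg hij, Nat.cast_zero, mul_zero, zero_mul]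
  · intro hj
    rw [Nat.choose_eq_zero_of_lt (by simpa using hj), Nat.cast_zero, zero_mul, zero_mul]

theorem integral_pow_mul_exp_neg_sq (k : ℕ) :
    ∫ r in Set.Ioi (0 : ℝ), r ^ (2 * k + 1) * Real.exp (-r ^ 2) = k.factorial / 2 := by
  have hGamma := integral_rpow_mul_exp_neg_rpow (p := 2) (q := (2 * k + 1 : ℕ)) two_pos
    (by linarith [Nat.cast_nonneg (α := ℝ) (2 * k + 1)])
  rw [show (((2 * k + 1 : ℕ) : ℝ) + 1) / 2 = k + 1 by push_cast; ring,
    Real.Gamma_nat_eq_factorial] at hGamma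
  simp only [Real.rpow_natCast, Real.rpow_two] at hGamma
  rw [hGamma]
  ring

theorem integrable_norm_rpow_mul_exp_neg_norm_rpow {p q : ℝ} (hp : 1 ≤ p) (hq : -2 < q) :
    Integrable fun z : ℂ => ‖z‖ ^ q * Real.exp (-‖z‖ ^ p) := by
  -- A non-integrable function would have integral zero.
  refine not_imp_comm.1 integral_undef ?_
  have hGamma : 0 < Real.Gamma ((q + 2) / p) :=
    Real.Gamma_pos_of_pos (div_pos (by linarith) (by linarith))
  rw [Complex.integral_rpow_mul_exp_neg_rpow hp hq]
  positivity

theorem exists_sq_add_sq_eq_one_mul_eq {t : ℝ} (ht₀ : -(1 / 2) ≤ t) (ht₁ : t ≤ 1 / 2) :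
    ∃ x y : ℝ, x ^ 2 + y ^ 2 = 1 ∧ x * y = t := by
  set θ := Real.arcsin (2 * t) / 2 with hθ
  refine ⟨Real.cos θ, Real.sin θ, Real.cos_sq_add_sin_sq θ, ?_⟩
  have hsin : 2 * Real.sin θ * Real.cos θ = 2 * t := by
    rw [← Real.sin_two_mul, hθ, mul_div_cancel₀ _ two_ne_zero,
      Real.sin_arcsin (by linarith) (by linarith)]
  linarith

theorem exists_norm_sq_add_norm_sq_eq_one_mul_conj_mul_eq {c w : ℂ} (h : ‖w‖ ≤ ‖c‖ / 2) :
    ∃ x y : ℂ, ‖x‖ ^ 2 + ‖y‖ ^ 2 = 1 ∧ x * conj y * c = w := by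
  rcases eq_or_ne c 0 with rfl | hc
  · exact ⟨1, 0, by simp, by simpa [eq_comm] using h⟩
  have ht : ‖w / c‖ ≤ 1 / 2 := by
    rw [norm_div, div_le_iff₀ (norm_pos_iff.2 hc)]
    linarith
  obtain ⟨x, y, hxy, hmul⟩ :=
    exists_sq_add_sq_eq_one_mul_eq (by linarith [norm_nonneg (w / c)]) ht
  refine ⟨Complex.exp (arg (w / c) * I) * x, y, ?_, ?_⟩
  · simpa [Complex.norm_exp_ofReal_mul_I] using hxy
  · calc Complex.exp (arg (w / c) * I) * x * conj (y : ℂ) * c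
        = ((x * y : ℝ) * Complex.exp (arg (w / c) * I)) * c := by
          rw [Complex.conj_ofReal, Complex.ofReal_mul]
          ring
      _ = w := by rw [hmul, Complex.norm_mul_exp_arg_mul_I, div_mul_cancel₀ _ hc]

section Gaussian

variable {E : Type*} [NormedAddCommGroup E] [NormedSpace ℝ E]

theorem integral_gaussMeasure (f : ℂ → E) :
    ∫ z, f z ∂gaussMeasure = ∫ z, (Real.exp (-‖z‖ ^ 2) / π) • f z := by
  rw [gaussMeasure, integral_withDensity_eq_integral_toReal_smul (by fun_prop) (by simp)]
  congr 1 with z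
  rw [ENNReal.toReal_ofReal (by positivity)]

theorem integrable_gaussMeasure_iff {f : ℂ → E} :
    Integrable f gaussMeasure ↔ Integrable fun z => (Real.exp (-‖z‖ ^ 2) / π) • f z := by
  rw [gaussMeasure, integrable_withDensity_iff_integrable_smul' (by fun_prop) (by simp)]
  refine integrable_congr (.of_forall fun z => ?_)
  simp only [ENNReal.toReal_ofReal (show 0 ≤ Real.exp (-‖z‖ ^ 2) / π by positivity)]

end Gaussian

section Fock

variable {f g h : ℂ → ℂ}

namespace MemFock

theorem differentiable (hf : MemFock f) : Differentiable ℂ f := hf.1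

theorem memLp (hf : MemFock f) : MemLp f 2 gaussMeasure :=
  (memLp_two_iff_integrable_sq_norm hf.differentiable.continuous.aestronglyMeasurable).2 hf.2

theorem add (hf : MemFock f) (hg : MemFock g) : MemFock (f + g) :=
  ⟨hf.differentiable.add hg.differentiable,
    (hf.memLp.add hg.memLp).integrable_norm_pow two_ne_zero⟩

theorem const_smul (hf : MemFock f) (c : ℂ) : MemFock (c • f) :=
  ⟨hf.differentiable.const_smul c, (hf.memLp.const_smul c).integrable_norm_pow two_ne_zero⟩

theorem integrable_mul_conj (hf : MemFock f) (hg : MemFock g) :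
    Integrable (fun z => f z * conj (g z)) gaussMeasure :=
  hf.memLp.integrable_mul hg.memLp.star

end MemFock

theorem memFock_pow (k : ℕ) : MemFock fun z => z ^ k := by
  refine ⟨show Differentiable ℂ _ by fun_prop, integrable_gaussMeasure_iff.2 ?_⟩
  have hint := integrable_norm_rpow_mul_exp_neg_norm_rpow (p := 2) (q := (2 * k : ℕ))
    one_le_two (by linarith [Nat.cast_nonneg (α := ℝ) (2 * k)])
  refine (hint.const_mul π⁻¹).congr (.of_forall fun z => ?_)
  simp only [Real.rpow_natCast, Real.rpow_two, norm_pow, smul_eq_mul]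
  ring

theorem fockInner_add_left (hf : MemFock f) (hg : MemFock g) (hh : MemFock h) :
    fockInner (f + g) h = fockInner f h + fockInner g h := by
  simp only [fockInner, Pi.add_apply, add_mul]
  exact integral_add (hf.integrable_mul_conj hh) (hg.integrable_mul_conj hh)

theorem fockInner_smul_left (c : ℂ) (f g : ℂ → ℂ) :
    fockInner (c • f) g = c * fockInner f g := by
  simp only [fockInner, Pi.smul_apply, smul_eq_mul, mul_assoc, integral_const_mul]

theorem conj_fockInner (f g : ℂ → ℂ) : conj (fockInner f g) = fockInner g f := by
  simp only [fockInner, ← integral_conj, map_mul, Complex.conj_conj, mul_comm]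

theorem fockInner_add_right (hf : MemFock f) (hg : MemFock g) (hh : MemFock h) :
    fockInner f (g + h) = fockInner f g + fockInner f h := by
  rw [← conj_fockInner, fockInner_add_left hg hh hf, map_add, conj_fockInner, conj_fockInner]

theorem fockInner_smul_right (c : ℂ) (f g : ℂ → ℂ) :
    fockInner f (c • g) = conj c * fockInner f g := by
  rw [← conj_fockInner, fockInner_smul_left, map_mul, conj_fockInner]

theorem fockInner_smul_add_smul {f' g' : ℂ → ℂ} (hf : MemFock f) (hg : MemFock g)
    (hf' : MemFock f') (hg' : MemFock g') (x y : ℂ) :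
    fockInner (x • f' + y • g') (x • f + y • g) =
      x * conj x * fockInner f' f + x * conj y * fockInner f' g +
        (y * conj x * fockInner g' f + y * conj y * fockInner g' g) := by
  have hxf := hf.const_smul x
  have hyg := hg.const_smul y
  rw [fockInner_add_left (hf'.const_smul x) (hg'.const_smul y) (hxf.add hyg),
    fockInner_add_right (hf'.const_smul x) hxf hyg,
    fockInner_add_right (hg'.const_smul y) hxf hyg]
  simp only [fockInner_smul_left, fockInner_smul_right]
  ring

theorem fockInner_self (f : ℂ → ℂ) : fockInner f f = fockNormSq f := by
  simp only [fockInner, fockNormSq, Complex.mul_conj', ← integral_complex_ofReal,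
    Complex.ofReal_pow]

theorem fockNormSq_eq_one_iff : fockNormSq f = 1 ↔ fockInner f f = 1 := by
  rw [fockInner_self, Complex.ofReal_eq_one]

theorem fockInner_pow (hf : MemFock f) (k : ℕ) :
    fockInner f (fun z => z ^ k) = iteratedDeriv k f 0 := by
  have hcircle : ∀ r ∈ Set.Ioi (0 : ℝ),
      r • circleAverage (fun z => (Real.exp (-‖z‖ ^ 2) / π) • (f z * conj (z ^ k))) 0 r =
        (r ^ (2 * k + 1) * Real.exp (-r ^ 2)) •
          (iteratedDeriv k f 0 / (π * k.factorial)) := fun r hr => by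
    have hsphere : Set.EqOn (fun z => (Real.exp (-‖z‖ ^ 2) / π) • (f z * conj (z ^ k)))
        (fun z => (Real.exp (-r ^ 2) / π) • (conj (z - 0) ^ k • f z))
        (Metric.sphere 0 |r|) := fun z hz => by
      rw [mem_sphere_zero_iff_norm] at hz
      simp only [hz, sq_abs, sub_zero, smul_eq_mul, map_pow, mul_comm (f z)]
    rw [Real.circleAverage_congr_sphere hsphere, Real.circleAverage_fun_smul,
      circleAverage_conj_pow_smul hr hf.differentiable.diffContOnCl]
    simp only [Complex.real_smul, smul_eq_mul]
    push_cast
    ring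
  have hπ : (π : ℂ) ≠ 0 := Complex.ofReal_ne_zero.2 Real.pi_ne_zero
  have hk : (k.factorial : ℂ) ≠ 0 := Nat.cast_ne_zero.2 k.factorial_ne_zero
  rw [fockInner, integral_gaussMeasure, integral_eq_integral_smul_circleAverage
      (integrable_gaussMeasure_iff.1 (hf.integrable_mul_conj (memFock_pow k))),
    setIntegral_congr_fun measurableSet_Ioi hcircle, integral_smul_const,
    integral_pow_mul_exp_neg_sq]
  simp only [Complex.real_smul]
  push_cast
  field_simp

end Fock

/-- The monomial `z ^ k / √(k!)`, the `k`-th vector of the standard orthonormal basis of `F²`. -/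
noncomputable def fockBasis (k : ℕ) : ℂ → ℂ :=
  (√k.factorial : ℂ)⁻¹ • fun z => z ^ k

section Basis

theorem ofReal_sqrt_factorial_ne_zero (k : ℕ) : (√k.factorial : ℂ) ≠ 0 :=
  Complex.ofReal_ne_zero.2 (Real.sqrt_ne_zero'.2 (Nat.cast_pos.2 k.factorial_pos))

theorem ofReal_sqrt_factorial_mul_self (k : ℕ) :
    (√k.factorial : ℂ) * √k.factorial = k.factorial := by
  rw [← Complex.ofReal_mul, Real.mul_self_sqrt (Nat.cast_nonneg _), Complex.ofReal_natCast]

theorem memFock_fockBasis (k : ℕ) : MemFock (fockBasis k) :=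
  (memFock_pow k).const_smul _

theorem fockInner_fockBasis {f : ℂ → ℂ} (hf : MemFock f) (k : ℕ) :
    fockInner f (fockBasis k) = iteratedDeriv k f 0 / √k.factorial := by
  rw [fockBasis, fockInner_smul_right, fockInner_pow hf, map_inv₀, Complex.conj_ofReal,
    inv_mul_eq_div]

theorem fockInner_fockBasis_fockBasis (j k : ℕ) :
    fockInner (fockBasis j) (fockBasis k) = if j = k then 1 else 0 := by
  rw [fockBasis, fockInner_smul_left, fockInner_fockBasis (memFock_pow j),
    iteratedDeriv_fun_pow_zero]
  rcases eq_or_ne j k with rfl | hjk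
  · rw [if_pos rfl, if_pos rfl, ← ofReal_sqrt_factorial_mul_self]
    field_simp [ofReal_sqrt_factorial_ne_zero j]
  · rw [if_neg hjk, if_neg hjk.symm, Nat.cast_zero, zero_div, mul_zero]

theorem fockNormSq_fockBasis (k : ℕ) : fockNormSq (fockBasis k) = 1 := by
  rw [fockNormSq_eq_one_iff, fockInner_fockBasis_fockBasis, if_pos rfl]

end Basis

section WeightedComposition

variable (ψ φ : ℂ → ℂ) {f g : ℂ → ℂ}

theorem wcomp_add (f g : ℂ → ℂ) : wcomp ψ φ (f + g) = wcomp ψ φ f + wcomp ψ φ g :=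
  funext fun _ => mul_add _ _ _

theorem wcomp_smul (c : ℂ) (f : ℂ → ℂ) : wcomp ψ φ (c • f) = c • wcomp ψ φ f :=
  funext fun _ => mul_left_comm _ _ _

variable {ψ φ}

theorem smul_add_smul_mem_numRange (hf : MemFock f) (hg : MemFock g)
    (hf₁ : fockNormSq f = 1) (hg₁ : fockNormSq g = 1) (hfg : fockInner f g = 0)
    (hTf : MemFock (wcomp ψ φ f)) (hTg : MemFock (wcomp ψ φ g))
    {x y : ℂ} (hxy : ‖x‖ ^ 2 + ‖y‖ ^ 2 = 1) :
    x * conj x * fockInner (wcomp ψ φ f) f + x * conj y * fockInner (wcomp ψ φ f) g +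
      (y * conj x * fockInner (wcomp ψ φ g) f + y * conj y * fockInner (wcomp ψ φ g) g) ∈
        numRange ψ φ := by
  refine ⟨x • f + y • g, (hf.const_smul x).add (hg.const_smul y), ?_, ?_⟩
  · have hgf : fockInner g f = 0 := by rw [← conj_fockInner, hfg, map_zero]
    rw [fockNormSq_eq_one_iff] at hf₁ hg₁ ⊢
    rw [fockInner_smul_add_smul hf hg hf hg, hf₁, hg₁, hfg, hgf, Complex.mul_conj',
      Complex.mul_conj']
    simpa using mod_cast hxy
  · rw [wcomp_add, wcomp_smul, wcomp_smul, fockInner_smul_add_smul hf hg hTf hTg]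

theorem closedBall_subset_numRange (hf : MemFock f) (hg : MemFock g)
    (hf₁ : fockNormSq f = 1) (hg₁ : fockNormSq g = 1) (hfg : fockInner f g = 0)
    (hTf : MemFock (wcomp ψ φ f)) (hTg : MemFock (wcomp ψ φ g))
    (hff : fockInner (wcomp ψ φ f) f = 0) (hgf : fockInner (wcomp ψ φ g) f = 0)
    (hgg : fockInner (wcomp ψ φ g) g = 0) :
    Metric.closedBall 0 (‖fockInner (wcomp ψ φ f) g‖ / 2) ⊆ numRange ψ φ := by
  intro w hw
  obtain ⟨x, y, hxy, hw'⟩ := exists_norm_sq_add_norm_sq_eq_one_mul_conj_mul_eq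
    (mem_closedBall_zero_iff.1 hw)
  -- On the span of `f` and `g` the quadratic form reduces to `x * conj y * ⟨T f, g⟩`.
  simpa [hff, hgf, hgg, hw'] using
    smul_add_smul_mem_numRange hf hg hf₁ hg₁ hfg hTf hTg hxy

end WeightedComposition

section Dilation

variable {q : ℂ → ℂ} {a : ℂ} {j : ℕ}

theorem fockInner_wcomp_dilation_fockBasis (hq : Differentiable ℂ q)
    (hT : MemFock (wcomp q (fun z => a * z) (fockBasis j))) (k : ℕ) :
    fockInner (wcomp q (fun z => a * z) (fockBasis j)) (fockBasis k) =
      a ^ j * k.descFactorial j * iteratedDeriv (k - j) q 0 /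
        (√j.factorial * √k.factorial) := by
  have hwcomp : wcomp q (fun z => a * z) (fockBasis j) =
      fun z => a ^ j / √j.factorial * (z ^ j * q z) := by
    ext z
    simp only [wcomp, fockBasis, Pi.smul_apply, smul_eq_mul]
    ring
  rw [fockInner_fockBasis hT, hwcomp, iteratedDeriv_const_mul_field,
    iteratedDeriv_pow_mul_zero hq.contDiff.contDiffAt]
  ring

theorem fockInner_wcomp_dilation_fockBasis_of_lt (hq : Differentiable ℂ q)
    (hT : MemFock (wcomp q (fun z => a * z) (fockBasis j))) {k : ℕ} (hkj : k < j) :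
    fockInner (wcomp q (fun z => a * z) (fockBasis j)) (fockBasis k) = 0 := by
  rw [fockInner_wcomp_dilation_fockBasis hq hT, Nat.descFactorial_of_lt hkj]
  simp

theorem fockInner_wcomp_dilation_fockBasis_add (hq : Differentiable ℂ q)
    (hT : MemFock (wcomp q (fun z => a * z) (fockBasis j))) (m : ℕ) :
    fockInner (wcomp q (fun z => a * z) (fockBasis j)) (fockBasis (j + m)) =
      iteratedDeriv m q 0 / √m.factorial * a ^ j * √(j + m).factorial /
        (√j.factorial * √m.factorial) := by
  have hfact : (m.factorial : ℂ) * (j + m).descFactorial j = (j + m).factorial := by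
    have h := Nat.factorial_mul_descFactorial (Nat.le_add_right j m)
    rw [Nat.add_sub_cancel_left] at h
    exact mod_cast h
  have hj := ofReal_sqrt_factorial_ne_zero j
  have hm := ofReal_sqrt_factorial_ne_zero m
  have hjm := ofReal_sqrt_factorial_ne_zero (j + m)
  rw [← ofReal_sqrt_factorial_mul_self m, ← ofReal_sqrt_factorial_mul_self (j + m)] at hfact
  rw [fockInner_wcomp_dilation_fockBasis hq hT, Nat.add_sub_cancel_left]
  field_simp
  linear_combination a ^ j * iteratedDeriv m q 0 * hfact

theorem closedBall_subset_numRange_dilation (hq0 : q 0 = 0)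
    (hT : ∀ k, MemFock (wcomp q (fun z => a * z) (fockBasis k))) (n : ℕ) {m : ℕ} (hm : 0 < m) :
    Metric.closedBall 0 (‖iteratedDeriv m q 0 / √m.factorial * a ^ n‖ * √(n + m).factorial /
      (2 * (√n.factorial * √m.factorial))) ⊆ numRange q (fun z => a * z) := by
  have hwcomp : wcomp q (fun z => a * z) (fockBasis 0) = q := by
    ext z
    simp [wcomp, fockBasis]
  have hq : Differentiable ℂ q := hwcomp ▸ (hT 0).differentiable
  have hdiag (k : ℕ) : fockInner (wcomp q (fun z => a * z) (fockBasis k)) (fockBasis k) = 0 := by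
    simpa [hq0] using fockInner_wcomp_dilation_fockBasis_add hq (hT k) 0
  have hupper : fockInner (wcomp q (fun z => a * z) (fockBasis (n + m))) (fockBasis n) = 0 :=
    fockInner_wcomp_dilation_fockBasis_of_lt hq (hT _) (Nat.lt_add_of_pos_right hm)
  have horth : fockInner (fockBasis n) (fockBasis (n + m)) = 0 := by
    rw [fockInner_fockBasis_fockBasis, if_neg (by lia)]
  convert closedBall_subset_numRange (memFock_fockBasis n) (memFock_fockBasis (n + m))
    (fockNormSq_fockBasis n) (fockNormSq_fockBasis (n + m)) horth (hT n) (hT (n + m))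
    (hdiag n) hupper (hdiag (n + m)) using 2
  rw [fockInner_wcomp_dilation_fockBasis_add hq (hT n)]
  simp only [norm_div, norm_mul, Complex.norm_real, Real.norm_eq_abs,
    abs_of_nonneg (Real.sqrt_nonneg _)]
  ring

end Dilation

/-- The unitary Weyl translation `f ↦ e^{p̄z - |p|²/2} f(z - p)` of `F²`, which moves the origin
to `p`. -/
noncomputable def fockTranslate (p : ℂ) (f : ℂ → ℂ) : ℂ → ℂ := fun z =>
  Complex.exp (conj p * z - (‖p‖ : ℂ) ^ 2 / 2) * f (z - p)

section Translate

variable (p : ℂ)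

theorem exp_neg_norm_sq_mul_norm_exp_sq (z : ℂ) :
    Real.exp (-‖z‖ ^ 2) * ‖Complex.exp (conj p * z - (‖p‖ : ℂ) ^ 2 / 2)‖ ^ 2 =
      Real.exp (-‖z - p‖ ^ 2) := by
  rw [Complex.norm_exp, ← Real.exp_nat_mul, ← Real.exp_add]
  have hp : (‖p‖ : ℂ) ^ 2 / 2 = ((‖p‖ ^ 2 / 2 : ℝ) : ℂ) := by push_cast; rfl
  rw [hp]
  congr 1
  simp only [Complex.sq_norm, Complex.normSq_apply, Complex.sub_re, Complex.sub_im,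
    Complex.mul_re, Complex.conj_re, Complex.conj_im, Complex.ofReal_re]
  push_cast
  ring

theorem fockInner_fockTranslate (f g : ℂ → ℂ) :
    fockInner (fockTranslate p f) (fockTranslate p g) = fockInner f g := by
  rw [fockInner, fockInner, integral_gaussMeasure, integral_gaussMeasure,
    ← integral_sub_right_eq_self
      (fun z => (Real.exp (-‖z‖ ^ 2) / π) • (f z * conj (g z))) p]
  congr 1 with z
  simp only [fockTranslate, ← exp_neg_norm_sq_mul_norm_exp_sq, Complex.real_smul, map_mul,
    Complex.ofReal_div, Complex.ofReal_mul, Complex.ofReal_pow, ← Complex.mul_conj' (cexp _)]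
  ring

theorem fockNormSq_fockTranslate (f : ℂ → ℂ) : fockNormSq (fockTranslate p f) = fockNormSq f := by
  rw [← Complex.ofReal_inj, ← fockInner_self, ← fockInner_self, fockInner_fockTranslate]

theorem fockTranslate_neg_fockTranslate (f : ℂ → ℂ) :
    fockTranslate (-p) (fockTranslate p f) = f := by
  ext z
  have hexp : conj (-p) * z - (‖-p‖ : ℂ) ^ 2 / 2 +
      (conj p * (z - -p) - (‖p‖ : ℂ) ^ 2 / 2) = 0 := by
    rw [map_neg, norm_neg]
    linear_combination Complex.conj_mul' p
  rw [fockTranslate, fockTranslate, ← mul_assoc, ← Complex.exp_add, hexp, Complex.exp_zero,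
    one_mul, sub_neg_eq_add, add_sub_cancel_right]

theorem fockTranslate_surjective : Function.Surjective (fockTranslate p) := fun f =>
  ⟨fockTranslate (-p) f, by simpa only [neg_neg] using fockTranslate_neg_fockTranslate (-p) f⟩

theorem wcomp_fockTranslate (ψ φ f : ℂ → ℂ) :
    wcomp ψ φ (fockTranslate p f) = fockTranslate p
      (wcomp (fun z => Complex.exp (conj p * (φ (z + p) - (z + p))) * ψ (z + p))
        (fun z => φ (z + p) - p) f) := by
  ext z
  have hexp : conj p * φ z - (‖p‖ : ℂ) ^ 2 / 2 =
      conj p * z - (‖p‖ : ℂ) ^ 2 / 2 + conj p * (φ z - z) := by ring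
  simp only [wcomp, fockTranslate, sub_add_cancel, hexp, Complex.exp_add]
  ring

variable {p} {f : ℂ → ℂ}

theorem memFock_fockTranslate (hf : MemFock f) (p : ℂ) : MemFock (fockTranslate p f) := by
  have hd := hf.differentiable
  refine ⟨show Differentiable ℂ _ by unfold fockTranslate; fun_prop,
    integrable_gaussMeasure_iff.2 ?_⟩
  refine ((integrable_gaussMeasure_iff.1 hf.2).comp_sub_right p).congr (.of_forall fun z => ?_)
  simp only [fockTranslate, smul_eq_mul, norm_mul, mul_pow,
    ← exp_neg_norm_sq_mul_norm_exp_sq]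
  ring

theorem memFock_fockTranslate_iff : MemFock (fockTranslate p f) ↔ MemFock f :=
  ⟨fun h => fockTranslate_neg_fockTranslate p f ▸ memFock_fockTranslate h (-p),
    fun h => memFock_fockTranslate h p⟩

theorem numRange_conj_fockTranslate (p : ℂ) (ψ φ : ℂ → ℂ) :
    numRange ψ φ =
      numRange (fun z => Complex.exp (conj p * (φ (z + p) - (z + p))) * ψ (z + p))
        (fun z => φ (z + p) - p) := by
  ext w
  simp only [numRange, Set.mem_ofPred_eq]
  rw [(fockTranslate_surjective p).exists]
  simp only [memFock_fockTranslate_iff, fockNormSq_fockTranslate, wcomp_fockTranslate,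
    fockInner_fockTranslate]

end Translate

theorem BoundedWCO.memFock_wcomp {ψ φ f : ℂ → ℂ} (h : BoundedWCO ψ φ) (hf : MemFock f) :
    MemFock (wcomp ψ φ f) :=
  h.elim fun _ hC => (hC f hf).1

theorem affine_apply_div_one_sub {𝕜 : Type*} [Field 𝕜] {a : 𝕜} (ha : a ≠ 1) (b : 𝕜) :
    a * (b / (1 - a)) + b = b / (1 - a) := by
  field_simp [sub_ne_zero.2 ha.symm]
  ring

/-- `hdom` says that the Weyl translates to `p` of all polynomials lie in the domain of `C_{ψ,φ}`.
For `a = 1`, `p = 0` and `ψ(z) = z` this operator is the unbounded multiplication by `z`. -/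
theorem numRange_contains_closedBall_general
    (a b : ℂ) (ψ φ : ℂ → ℂ) (hφ : φ = fun z => a * z + b)
    (p : ℂ) (hp : φ p = p) (hψp : ψ p = 0)
    (hdom : ∀ k : ℕ, MemFock (wcomp ψ φ (fockTranslate p (fockBasis k))))
    (q : ℂ → ℂ) (hq : q = fun z => Complex.exp (conj p * (a - 1) * z) * ψ (z + p))
    (qhat : ℕ → ℂ) (hqhat : ∀ j : ℕ, qhat j = iteratedDeriv j q 0 / (√j.factorial : ℂ))
    (n m : ℕ) (hm : 0 < m) :
    Metric.closedBall (0 : ℂ) (‖qhat m * a ^ n‖ * √(n + m).factorial /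
        (2 * (√n.factorial * √m.factorial))) ⊆ numRange ψ φ := by
  have hφp (z : ℂ) : φ (z + p) = a * z + p := by
    rw [hφ] at hp ⊢
    linear_combination hp
  have hφ' : (fun z => a * z) = fun z => φ (z + p) - p := by
    simp only [hφp, add_sub_cancel_right]
  have hq' : q = fun z => Complex.exp (conj p * (φ (z + p) - (z + p))) * ψ (z + p) := by
    simp only [hq, hφp, add_sub_add_right_eq_sub, ← sub_one_mul, mul_assoc]
  have hq0 : q 0 = 0 := by simp only [hq, zero_add, hψp, mul_zero]
  have hT (k : ℕ) : MemFock (wcomp q (fun z => a * z) (fockBasis k)) := by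
    rw [← memFock_fockTranslate_iff (p := p), hq', hφ', ← wcomp_fockTranslate]
    exact hdom k
  rw [hqhat, numRange_conj_fockTranslate p ψ φ, ← hq', ← hφ']
  exact closedBall_subset_numRange_dilation hq0 hT n hm

/-- Theorem 2.3: for `φ(z)=az+b`, `0<|a|<1`, `ψ(p)=0` where `p=b/(1-a)`, and `C_{ψ,φ}`
bounded on `F²`, with `q(z)=e^{p̄(a-1)z}ψ(z+p) = Σ q̂_j z^j/√(j!)`, the numerical range
`W(C_{ψ,φ})` contains the closed disk centered at `0` of radius
`|q̂_m a^n|√((n+m)!)/(2√(n!m!))` for every `n ≥ 0` and `m ≥ 1`. -/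
theorem numRange_contains_closedBall
    (a b : ℂ) (ha0 : 0 < ‖a‖) (ha1 : ‖a‖ < 1)
    (ψ : ℂ → ℂ) (hψ : Entire ψ)
    (φ : ℂ → ℂ) (hφ : φ = fun z => a * z + b)
    (hbdd : BoundedWCO ψ φ)
    (p : ℂ) (hp : p = b / (1 - a)) (hψp : ψ p = 0)
    (q : ℂ → ℂ) (hq : q = fun z => Complex.exp ((starRingEnd ℂ) p * (a - 1) * z) * ψ (z + p))
    (qhat : ℕ → ℂ)
    (hqhat : ∀ j : ℕ, qhat j = iteratedDeriv j q 0 / (Real.sqrt (Nat.factorial j) : ℂ))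
    (n m : ℕ) (hm : 0 < m) :
    Metric.closedBall (0 : ℂ) (‖qhat m * a ^ n‖ * Real.sqrt (Nat.factorial (n + m)) /
        (2 * (Real.sqrt (Nat.factorial n) * Real.sqrt (Nat.factorial m)))) ⊆
      numRange ψ φ :=
  numRange_contains_closedBall_general a b ψ φ hφ p
    (hφ ▸ hp ▸ affine_apply_div_one_sub (fun h => by simp [h] at ha1) b) hψp
    (fun k => hbdd.memFock_wcomp (memFock_fockTranslate (memFock_fockBasis k) p))
    q hq qhat hqhat n m hm
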